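/- There exists γ₀ > 0, depending only on the dimension d, such that for every 0 < γ ≤ γ₀, every finite rectangle Λ ⊂ ℤ^d, every E ∈ ℝ, and every δ with γ^{1/4} < δ ≤ 1, letting N(I) denote the number of eigenvalues of H(u), counted with multiplicity, lying in I = [E − δ/2, E + δ/2], one has 𝔼 N(I) ≤ 6·√δ·|Λ|. -/

import Mathlib

open Matrix MeasureTheory

/-- The uniform probability measure on `[-1,1]`. -/
noncomputable def unif : Measure ℝ :=
  ((2 : NNReal))⁻¹ • (volume.restrict (Set.Icc (-1 : ℝ) 1))

instance : IsProbabilityMeasure unif := by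
  constructor
  rw [unif, Measure.smul_apply, Measure.restrict_apply_univ, Real.volume_Icc]
  norm_num
  rw [ENNReal.smul_def]
  simp [ENNReal.inv_mul_cancel]

/-- The product of uniform measures on `[-1,1]^ι` (i.i.d. uniform random variables). -/
noncomputable def unifPi (ι : Type*) [Fintype ι] : Measure (ι → ℝ) :=
  Measure.pi fun _ => unif

/-- The ℓ¹ distance `|x-y| = Σᵢ |xᵢ-yᵢ|` on `ℤ^d`, as a natural number. -/
def dist1 {d : ℕ} (x y : Fin d → ℤ) : ℕ := ∑ i, (x i - y i).natAbs

/-- The random block Hamiltonian: diagonal 2×2 block `[[u_x,1],[1,-u_x]]` at each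
position `x ∈ Λ`, and block `γ·I₂` between nearest-neighbor positions. -/
noncomputable def Ham (d : ℕ) (γ : ℝ) (Λ : Finset (Fin d → ℤ)) (u : {x // x ∈ Λ} → ℝ) :
    Matrix ({x // x ∈ Λ} × Fin 2) ({x // x ∈ Λ} × Fin 2) ℝ := fun s t =>
  if s.1 = t.1 then
    (if s.2 = t.2 then (if s.2 = 0 then u s.1 else -u s.1) else 1)
  else if dist1 (s.1 : Fin d → ℤ) (t.1 : Fin d → ℤ) = 1 then
    (if s.2 = t.2 then γ else 0)
  else 0

/-- The number of eigenvalues of `H(u)`, counted with multiplicity (i.e. real roots of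
the characteristic polynomial with multiplicity), in `[E - δ/2, E + δ/2]`. -/
noncomputable def eigCount (d : ℕ) (γ : ℝ) (Λ : Finset (Fin d → ℤ))
    (u : {x // x ∈ Λ} → ℝ) (E δ : ℝ) : ℕ :=
  Multiset.card ((Ham d γ Λ u).charpoly.roots.filter
    (fun r => E - δ / 2 ≤ r ∧ r ≤ E + δ / 2))


lemma count_le {n : Type*} [Fintype n] [DecidableEq n] (A : Matrix n n ℝ) (hA : A.IsHermitian)
    (E r : ℝ) (T : Finset n)
    (h : ∀ v : n → ℝ, (∀ i ∈ T, v i = 0) →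
      ∑ i, ((A *ᵥ v) i - E * v i) ^ 2 ≤ r ^ 2 * ∑ i, v i ^ 2 → v = 0) :
    Multiset.card (A.charpoly.roots.filter (fun x => E - r ≤ x ∧ x ≤ E + r)) ≤ T.card := by
  classical
  set S : Finset n := Finset.univ.filter
    (fun i => E - r ≤ hA.eigenvalues i ∧ hA.eigenvalues i ≤ E + r) with hS
  have hcard : Multiset.card (A.charpoly.roots.filter (fun x => E - r ≤ x ∧ x ≤ E + r))
      = S.card := by
    rw [hA.roots_charpoly_eq_eigenvalues, Multiset.filter_map, Multiset.card_map, hS]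
    rfl
  rw [hcard]
  let b := hA.eigenvectorBasis
  have hon : Orthonormal ℝ (fun i : S => b i) :=
    b.orthonormal.comp (fun i : S => (i : n)) Subtype.val_injective
  have hnorm : ∀ c : S → ℝ, ∑ j, ((∑ i : S, c i • b i) j) ^ 2 = ∑ i, c i ^ 2 := by
    intro c
    have h1 : ∑ j, ((∑ i : S, c i • b i) j) ^ 2 = ‖∑ i : S, c i • b i‖ ^ 2 := by
      rw [EuclideanSpace.norm_sq_eq]; simp
    rw [h1, ← real_inner_self_eq_norm_sq, hon.inner_sum]
    simp [pow_two]
  let F : (S → ℝ) →ₗ[ℝ] EuclideanSpace ℝ n := Fintype.linearCombination ℝ (fun i : S => b i)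
  let G : EuclideanSpace ℝ n →ₗ[ℝ] (T → ℝ) :=
    { toFun := fun v t => v t, map_add' := fun _ _ => rfl, map_smul' := fun _ _ => rfl }
  have hF : ∀ c, F c = ∑ i : S, c i • b i := fun c => by
    simp [F, Fintype.linearCombination_apply]
  have hinj : Function.Injective (G ∘ₗ F) := by
    rw [injective_iff_map_eq_zero]
    intro c hc
    have hAv : ∀ j, (A *ᵥ (F c).ofLp) j - E * (F c) j
        = (∑ i : S, ((hA.eigenvalues i - E) * c i) • b i) j := by
      intro j
      have : A *ᵥ (F c).ofLp = ∑ i : S, c i • (hA.eigenvalues i • (b i).ofLp) := by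
        rw [hF]
        simp only [WithLp.ofLp_sum, WithLp.ofLp_smul, Matrix.mulVec_sum, Matrix.mulVec_smul]
        simp only [b, hA.mulVec_eigenvectorBasis]
      rw [this, hF]
      simp only [WithLp.ofLp_sum, WithLp.ofLp_smul, Finset.sum_apply, Pi.smul_apply, smul_eq_mul,
        Finset.mul_sum]
      rw [← Finset.sum_sub_distrib]
      refine Finset.sum_congr rfl fun i _ => ?_
      ring
    have hv : (F c).ofLp = 0 := by
      apply h
      · intro i hi
        exact congrFun hc ⟨i, hi⟩
      · simp_rw [hAv]
        rw [hnorm (fun i => (hA.eigenvalues i - E) * c i), hF, hnorm, Finset.mul_sum]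
        refine Finset.sum_le_sum fun i _ => ?_
        have hi := (Finset.mem_filter.1 i.2).2
        rw [mul_pow]
        refine mul_le_mul_of_nonneg_right ?_ (sq_nonneg _)
        apply sq_le_sq'
        · linarith [hi.1]
        · linarith [hi.2]
    have h0 : ∑ i, c i ^ 2 = 0 := by
      rw [← hnorm, ← hF, hv]; simp
    funext i
    have := (Finset.sum_eq_zero_iff_of_nonneg (fun i _ => sq_nonneg (c i))).1 h0 i
      (Finset.mem_univ _)
    simpa using this
  have := LinearMap.finrank_le_finrank_of_injective hinj
  simpa using this

lemma dist1_comm' {d : ℕ} (x y : Fin d → ℤ) : dist1 x y = dist1 y x := by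
  unfold dist1
  refine Finset.sum_congr rfl fun i _ => ?_
  omega

/-- Unweighted hopping matrix. -/
noncomputable def hop (d : ℕ) (Λ : Finset (Fin d → ℤ)) (s t : {x // x ∈ Λ} × Fin 2) : ℝ :=
  if (s.1 ≠ t.1 ∧ dist1 (s.1 : Fin d → ℤ) (t.1 : Fin d → ℤ) = 1) ∧ s.2 = t.2 then 1 else 0

lemma hop_comm (d : ℕ) (Λ : Finset (Fin d → ℤ)) (s t : {x // x ∈ Λ} × Fin 2) :
    hop d Λ s t = hop d Λ t s := by
  unfold hop
  simp only [dist1_comm' (s.1 : Fin d → ℤ), ne_comm (a := s.1), eq_comm (a := s.2)]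

lemma hop_nonneg (d : ℕ) (Λ : Finset (Fin d → ℤ)) (s t : {x // x ∈ Λ} × Fin 2) :
    0 ≤ hop d Λ s t := by
  unfold hop
  split_ifs <;> norm_num

lemma hop_row (d : ℕ) (Λ : Finset (Fin d → ℤ)) (s : {x // x ∈ Λ} × Fin 2) :
    ∑ t, hop d Λ s t ≤ 3 ^ d := by
  unfold hop
  rw [Finset.sum_boole]
  have : (Finset.univ.filter (fun t : {x // x ∈ Λ} × Fin 2 =>
      (s.1 ≠ t.1 ∧ dist1 (s.1 : Fin d → ℤ) (t.1 : Fin d → ℤ) = 1) ∧ s.2 = t.2)).card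
      ≤ (Finset.Icc (fun i => s.1.1 i - 1) (fun i => s.1.1 i + 1)).card := by
    apply Finset.card_le_card_of_injOn (fun t => t.1.1)
    · intro t ht
      have ht := (Finset.mem_filter.1 ht).2.1.2
      simp only [Finset.coe_Icc, Set.mem_Icc, Pi.le_def]
      have key : ∀ i, (s.1.1 i - t.1.1 i).natAbs ≤ 1 := by
        intro i
        rw [← ht]
        unfold dist1
        exact Finset.single_le_sum (f := fun i => (s.1.1 i - t.1.1 i).natAbs)
          (fun _ _ => Nat.zero_le _) (Finset.mem_univ i)
      constructor <;> intro i <;> have := key i <;> omega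
    · intro t ht t' ht' htt
      have h1 := (Finset.mem_filter.1 ht).2.2
      have h2 := (Finset.mem_filter.1 ht').2.2
      exact Prod.ext (Subtype.ext htt) (h1.symm.trans h2)
  have h3 : (Finset.Icc (fun i => s.1.1 i - 1) (fun i => s.1.1 i + 1)).card = 3 ^ d := by
    rw [Pi.card_Icc]
    have : ∀ i, (Finset.Icc (s.1.1 i - 1) (s.1.1 i + 1)).card = 3 := by
      intro i
      rw [Int.card_Icc]
      have : s.1.1 i + 1 + 1 - (s.1.1 i - 1) = 3 := by ring
      rw [this]; rfl
    simp only [this]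
    simp
  rw [h3] at this
  exact_mod_cast this

lemma hop_bound (d : ℕ) (Λ : Finset (Fin d → ℤ)) (v : {x // x ∈ Λ} × Fin 2 → ℝ) :
    ∑ s, (∑ t, hop d Λ s t * v t) ^ 2 ≤ (3 ^ d) ^ 2 * ∑ t, v t ^ 2 := by
  calc ∑ s, (∑ t, hop d Λ s t * v t) ^ 2
      ≤ ∑ s, (3 ^ d) * ∑ t, hop d Λ s t * v t ^ 2 := by
        refine Finset.sum_le_sum fun s _ => ?_
        refine (Finset.sum_sq_le_sum_mul_sum_of_sq_le_mul Finset.univ (f := fun t => hop d Λ s t)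
          (g := fun t => hop d Λ s t * v t ^ 2) (fun t _ => hop_nonneg _ _ _ _)
          (fun t _ => mul_nonneg (hop_nonneg _ _ _ _) (sq_nonneg _))
          (fun t _ => le_of_eq (by ring))).trans ?_
        exact mul_le_mul_of_nonneg_right (hop_row _ _ _)
          (Finset.sum_nonneg fun t _ => mul_nonneg (hop_nonneg _ _ _ _) (sq_nonneg _))
    _ = (3 ^ d) * ∑ t, (∑ s, hop d Λ t s) * v t ^ 2 := by
        rw [← Finset.mul_sum, Finset.sum_comm]
        congr 1
        refine Finset.sum_congr rfl fun t _ => ?_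
        rw [Finset.sum_mul]
        refine Finset.sum_congr rfl fun s _ => ?_
        rw [hop_comm]
    _ ≤ (3 ^ d) * ∑ t, (3 ^ d) * v t ^ 2 := by
        refine mul_le_mul_of_nonneg_left ?_ (by positivity)
        refine Finset.sum_le_sum fun t _ => ?_
        exact mul_le_mul_of_nonneg_right (hop_row _ _ _) (sq_nonneg _)
    _ = _ := by rw [← Finset.mul_sum]; ring

lemma ham_herm (d : ℕ) (γ : ℝ) (Λ : Finset (Fin d → ℤ)) (u : {x // x ∈ Λ} → ℝ) :
    (Ham d γ Λ u).IsHermitian := by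
  ext s t
  rw [Matrix.conjTranspose_apply, star_trivial]
  unfold Ham
  rw [dist1_comm']
  by_cases h1 : s.1 = t.1 <;> by_cases h2 : s.2 = t.2 <;>
    simp [h1, h2, Ne.symm, eq_comm (a := t.1), eq_comm (a := t.2)]

lemma ham_split (d : ℕ) (γ : ℝ) (Λ : Finset (Fin d → ℤ)) (u : {x // x ∈ Λ} → ℝ)
    (v : {x // x ∈ Λ} × Fin 2 → ℝ) (s) :
    (Ham d γ Λ u *ᵥ v) s = (Ham d 0 Λ u *ᵥ v) s + γ * ∑ t, hop d Λ s t * v t := by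
  simp only [Matrix.mulVec, dotProduct, Finset.mul_sum]
  rw [← Finset.sum_add_distrib]
  refine Finset.sum_congr rfl fun t _ => ?_
  unfold Ham hop
  by_cases h1 : s.1 = t.1 <;> by_cases h2 : s.2 = t.2 <;>
    by_cases h3 : dist1 (s.1 : Fin d → ℤ) (t.1 : Fin d → ℤ) = 1 <;> simp [h1, h2, h3]

lemma ham_zero (d : ℕ) (Λ : Finset (Fin d → ℤ)) (u : {x // x ∈ Λ} → ℝ)
    (v : {x // x ∈ Λ} × Fin 2 → ℝ) (x) :
    (Ham d 0 Λ u *ᵥ v) (x, 0) = u x * v (x, 0) + v (x, 1) ∧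
    (Ham d 0 Λ u *ᵥ v) (x, 1) = v (x, 0) - u x * v (x, 1) := by
  simp only [Matrix.mulVec, dotProduct, Fintype.sum_prod_type, Fin.sum_univ_two]
  constructor
  · rw [Finset.sum_eq_single x]
    · simp [Ham]
    · intro y _ hy
      simp [Ham, hy.symm]
    · simp
  · rw [Finset.sum_eq_single x]
    · simp [Ham]; ring
    · intro y _ hy
      simp [Ham, hy.symm]
    · simp

lemma block_bound (u E p q : ℝ) :
    (√(1 + u ^ 2) - |E|) ^ 2 * (p ^ 2 + q ^ 2) ≤
      (u * p + q - E * p) ^ 2 + (p - u * q - E * q) ^ 2 := by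
  set s := √(1 + u ^ 2) with hs
  have hs2 : s ^ 2 = 1 + u ^ 2 := Real.sq_sqrt (by positivity)
  have hs0 : 0 ≤ s := Real.sqrt_nonneg _
  have hk : |u * p ^ 2 + 2 * p * q - u * q ^ 2| ≤ s * (p ^ 2 + q ^ 2) := by
    apply abs_le_of_sq_le_sq _ (by positivity)
    rw [mul_pow, hs2]
    nlinarith [sq_nonneg (p ^ 2 - q ^ 2 - 2 * u * p * q)]
  have h2 : E * (u * p ^ 2 + 2 * p * q - u * q ^ 2) ≤ |E| * (s * (p ^ 2 + q ^ 2)) := by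
    refine (le_abs_self _).trans ?_
    rw [abs_mul]
    exact mul_le_mul_of_nonneg_left hk (abs_nonneg _)
  have hE : |E| ^ 2 = E ^ 2 := sq_abs E
  have : (s - |E|) ^ 2 * (p ^ 2 + q ^ 2)
    = (1 + u ^ 2 + E ^ 2) * (p ^ 2 + q ^ 2) - 2 * (|E| * (s * (p ^ 2 + q ^ 2))) := by
    rw [← hs2, ← hE]; ring
  rw [this]
  nlinarith

lemma eigCount_le (d : ℕ) (γ : ℝ) (Λ : Finset (Fin d → ℤ)) (u : {x // x ∈ Λ} → ℝ) (E δ : ℝ)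
    (hγ : 0 < γ) (hδ : 0 < δ) (h : γ * 3 ^ d ≤ δ / 2) :
    (eigCount d γ Λ u E δ : ℝ) ≤
      2 * ∑ x, ({a : ℝ | |√(1 + a ^ 2) - abs E| ≤ δ}.indicator 1 (u x) : ℝ) := by
  classical
  set B : Finset {x // x ∈ Λ} := Finset.univ.filter (fun x => |√(1 + u x ^ 2) - abs E| ≤ δ) with hB
  have hr : (∑ x, ({a : ℝ | |√(1 + a ^ 2) - abs E| ≤ δ}.indicator 1 (u x) : ℝ)) = B.card := by
    simp only [Set.indicator_apply, Set.mem_ofPred_eq, Pi.one_apply]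
    rw [Finset.sum_boole]
  rw [hr]
  have key : eigCount d γ Λ u E δ ≤ (B ×ˢ (Finset.univ : Finset (Fin 2))).card := by
    unfold eigCount
    apply count_le _ (ham_herm d γ Λ u)
    intro v hv0 hv
    have hb := hop_bound d Λ v
    set N := ∑ i, v i ^ 2 with hN
    have hN0 : 0 ≤ N := Finset.sum_nonneg fun i _ => sq_nonneg _
    have h1 : ∑ s, ((Ham d 0 Λ u *ᵥ v) s - E * v s) ^ 2 ≤ δ ^ 2 * N := by
      calc ∑ s, ((Ham d 0 Λ u *ᵥ v) s - E * v s) ^ 2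
          ≤ ∑ s, (2 * ((Ham d γ Λ u *ᵥ v) s - E * v s) ^ 2
              + 2 * γ ^ 2 * (∑ t, hop d Λ s t * v t) ^ 2) := by
            refine Finset.sum_le_sum fun s _ => ?_
            rw [ham_split d γ]
            nlinarith [sq_nonneg ((Ham d 0 Λ u *ᵥ v) s - E * v s
              + 2 * (γ * ∑ t, hop d Λ s t * v t))]
        _ = 2 * ∑ s, ((Ham d γ Λ u *ᵥ v) s - E * v s) ^ 2
              + 2 * γ ^ 2 * ∑ s, (∑ t, hop d Λ s t * v t) ^ 2 := by
            rw [Finset.sum_add_distrib, ← Finset.mul_sum, ← Finset.mul_sum]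
        _ ≤ 2 * ((δ / 2) ^ 2 * N) + 2 * γ ^ 2 * ((3 ^ d) ^ 2 * N) := by gcongr
        _ = (δ ^ 2 / 2 + 2 * (γ * 3 ^ d) ^ 2) * N := by ring
        _ ≤ (δ ^ 2 / 2 + 2 * (δ / 2) ^ 2) * N := by gcongr
        _ = δ ^ 2 * N := by ring
    have h2 : ∑ x, ((√(1 + u x ^ 2) - |E|) ^ 2 - δ ^ 2) * (v (x, 0) ^ 2 + v (x, 1) ^ 2) ≤ 0 := by
      have : ∑ x, (√(1 + u x ^ 2) - |E|) ^ 2 * (v (x, 0) ^ 2 + v (x, 1) ^ 2) ≤ δ ^ 2 * N := by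
        refine le_trans ?_ h1
        rw [Fintype.sum_prod_type]
        refine Finset.sum_le_sum fun x _ => ?_
        rw [Fin.sum_univ_two, (ham_zero d Λ u v x).1, (ham_zero d Λ u v x).2]
        exact block_bound _ _ _ _
      simp only [sub_mul, Finset.sum_sub_distrib]
      rw [← Finset.mul_sum]
      simp only [hN, Fintype.sum_prod_type, Fin.sum_univ_two] at this
      linarith
    have hlt : ∀ x, x ∉ B → 0 < (√(1 + u x ^ 2) - |E|) ^ 2 - δ ^ 2 := by
      intro x hx
      have : ¬ |√(1 + u x ^ 2) - abs E| ≤ δ := by simpa [hB] using hx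
      rw [sub_pos, ← sq_abs (√(1 + u x ^ 2) - |E|)]
      exact pow_lt_pow_left₀ (not_le.1 this) hδ.le (by norm_num)
    have hz : ∀ x, x ∈ B → v (x, 0) = 0 ∧ v (x, 1) = 0 := fun x hx =>
      ⟨hv0 _ (by simp [hx]), hv0 _ (by simp [hx])⟩
    have hnn : ∀ x ∈ Finset.univ,
        0 ≤ ((√(1 + u x ^ 2) - |E|) ^ 2 - δ ^ 2) * (v (x, 0) ^ 2 + v (x, 1) ^ 2) := by
      intro x _
      by_cases hx : x ∈ B
      · simp [hz x hx]
      · exact mul_nonneg (hlt x hx).le (by positivity)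
    have h3 := (Finset.sum_eq_zero_iff_of_nonneg hnn).1 (le_antisymm h2 (Finset.sum_nonneg hnn))
    have h4 : ∀ x, v (x, 0) = 0 ∧ v (x, 1) = 0 := by
      intro x
      by_cases hx : x ∈ B
      · exact hz x hx
      · have := (mul_eq_zero.1 (h3 x (Finset.mem_univ _))).resolve_left (hlt x hx).ne'
        constructor <;> nlinarith [sq_nonneg (v (x, 0)), sq_nonneg (v (x, 1))]
    funext ⟨x, j⟩
    fin_cases j
    · exact (h4 x).1
    · exact (h4 x).2
  have key' : (eigCount d γ Λ u E δ : ℝ) ≤ ((B ×ˢ (Finset.univ : Finset (Fin 2))).card : ℝ) := by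
    exact_mod_cast key
  rw [Finset.card_product] at key'
  simp only [Finset.card_univ, Fintype.card_fin] at key'
  push_cast at key'
  linarith

lemma unif_bound (e δ : ℝ) (hδ : 0 < δ) :
    unif.real {a : ℝ | |√(1 + a ^ 2) - e| ≤ δ} ≤ 3 * √δ := by
  set S := {a : ℝ | |√(1 + a ^ 2) - e| ≤ δ} with hS
  have hdiam : ∀ T : Set ℝ, T ⊆ S → (∀ a ∈ T, ∀ b ∈ T, 0 ≤ a * b) → T ⊆ Set.Icc (-1) 1 →
      volume T ≤ ENNReal.ofReal (3 * √δ) := by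
    intro T hT hs hI
    refine (Real.volume_le_diam T).trans (Metric.ediam_le fun a ha b hb => ?_)
    rw [edist_dist, Real.dist_eq]
    apply ENNReal.ofReal_le_ofReal
    apply abs_le_of_sq_le_sq _ (by positivity)
    rw [mul_pow, Real.sq_sqrt hδ.le]
    have hsq : ∀ a b, a ∈ T → b ∈ T → b ^ 2 ≤ a ^ 2 → a ^ 2 - b ^ 2 ≤ 9 * δ := by
      intro a b ha hb hab
      have h1 := abs_le.1 (show |√(1 + a ^ 2) - e| ≤ δ from hT ha)
      have h2 := abs_le.1 (show |√(1 + b ^ 2) - e| ≤ δ from hT hb)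
      have h3 : √(1 + a ^ 2) ^ 2 = 1 + a ^ 2 := Real.sq_sqrt (by positivity)
      have h4 : √(1 + b ^ 2) ^ 2 = 1 + b ^ 2 := Real.sq_sqrt (by positivity)
      have hle : ∀ c ∈ T, √(1 + c ^ 2) ≤ 3 / 2 := by
        intro c hc
        rw [Real.sqrt_le_left (by norm_num)]
        have := hI hc
        nlinarith [this.1, this.2]
      have h5 := hle a ha
      have h6 := hle b hb
      have h7 : √(1 + b ^ 2) ≤ √(1 + a ^ 2) := Real.sqrt_le_sqrt (by linarith)
      have h8 : 0 ≤ √(1 + b ^ 2) := Real.sqrt_nonneg _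
      calc a ^ 2 - b ^ 2 = (√(1 + a ^ 2) - √(1 + b ^ 2)) * (√(1 + a ^ 2) + √(1 + b ^ 2)) := by
            linear_combination h4 - h3
        _ ≤ (2 * δ) * 3 := by
            apply mul_le_mul <;> linarith
        _ ≤ 9 * δ := by linarith
    have hab := hs a ha b hb
    rcases le_total (b ^ 2) (a ^ 2) with h | h
    · have := hsq a b ha hb h
      have : b ^ 2 ≤ a * b := by
        have := sq_le_sq.1 h
        rw [← abs_of_nonneg hab, abs_mul, ← sq_abs]
        nlinarith [abs_nonneg b]
      nlinarith
    · have := hsq b a hb ha h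
      have : a ^ 2 ≤ a * b := by
        have := sq_le_sq.1 h
        rw [← abs_of_nonneg hab, abs_mul, ← sq_abs]
        nlinarith [abs_nonneg a]
      nlinarith
  have hvol : volume (S ∩ Set.Icc (-1) 1) ≤ ENNReal.ofReal (6 * √δ) := by
    calc volume (S ∩ Set.Icc (-1) 1)
        ≤ volume ((S ∩ Set.Icc (-1) 0) ∪ (S ∩ Set.Icc 0 1)) := by
          apply measure_mono
          rintro a ⟨h1, h2, h3⟩
          rcases le_total a 0 with h | h
          · exact Or.inl ⟨h1, h2, h⟩
          · exact Or.inr ⟨h1, h, h3⟩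
      _ ≤ _ := measure_union_le _ _
      _ ≤ ENNReal.ofReal (3 * √δ) + ENNReal.ofReal (3 * √δ) := by
          gcongr
          · apply hdiam _ Set.inter_subset_left
            · intro a ha b hb
              exact mul_nonneg_of_nonpos_of_nonpos ha.2.2 hb.2.2
            · rintro a ⟨_, h1, h2⟩
              exact ⟨h1, by linarith⟩
          · apply hdiam _ Set.inter_subset_left
            · intro a ha b hb
              exact mul_nonneg ha.2.1 hb.2.1
            · rintro a ⟨_, h1, h2⟩
              exact ⟨by linarith, h2⟩
      _ = ENNReal.ofReal (6 * √δ) := by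
          rw [← ENNReal.ofReal_add (by positivity) (by positivity)]
          congr 1; ring
  have hr : unif.real S = 2⁻¹ * (volume (S ∩ Set.Icc (-1) 1)).toReal := by
    rw [Measure.real, unif, Measure.smul_apply, Measure.restrict_apply' measurableSet_Icc,
      ENNReal.smul_def, smul_eq_mul, ENNReal.toReal_mul]
    simp
  rw [hr]
  have := ENNReal.toReal_le_of_le_ofReal (by positivity) hvol
  linarith

/-- macroscopic density of states estimate. There is `γ₀ > 0` such that
for all `0 < γ ≤ γ₀`, every `δ` with `γ^{1/4} < δ ≤ 1`, every rectangle `Λ` and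
every `E`: `𝔼 N([E-δ/2, E+δ/2]) ≤ 6·√δ·|Λ|`. -/
theorem density_of_states_macroscopic (d : ℕ) (hd : 1 ≤ d) :
    ∃ γ₀ : ℝ, 0 < γ₀ ∧
      ∀ γ : ℝ, 0 < γ → γ ≤ γ₀ →
      ∀ δ : ℝ, γ ^ ((1 : ℝ) / 4) < δ → δ ≤ 1 →
      ∀ Λ : Finset (Fin d → ℤ), (∃ a b', Λ = Finset.Icc a b') →
      ∀ E : ℝ,
      ∫ u, (eigCount d γ Λ u E δ : ℝ) ∂(unifPi {x // x ∈ Λ}) ≤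
        6 * Real.sqrt δ * (Λ.card : ℝ) := by
  refine ⟨(1 / (2 * 3 ^ d)) ^ 4, by positivity, ?_⟩
  intro γ hγ hγ0 δ hδ hδ1 Λ _ E
  set t := γ ^ ((1 : ℝ) / 4) with ht
  have ht0 : 0 < t := Real.rpow_pos_of_pos hγ _
  have ht4 : t ^ 4 = γ := by
    rw [ht, ← Real.rpow_natCast, ← Real.rpow_mul hγ.le]
    norm_num
  have htq : t ≤ 1 / (2 * 3 ^ d) := by
    rw [← ht4] at hγ0
    exact le_of_pow_le_pow_left₀ (by norm_num) (by positivity) hγ0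
  have hδ0 : 0 < δ := ht0.trans hδ
  have hsmall : γ * 3 ^ d ≤ δ / 2 := by
    have h1 : t * 3 ^ d ≤ 1 / 2 := by
      have : t * 3 ^ d ≤ 1 / (2 * 3 ^ d) * 3 ^ d := by gcongr
      refine this.trans (le_of_eq ?_)
      field_simp
    have h2 : t ^ 3 ≤ δ := by
      have : t ^ 3 ≤ t := by
        apply pow_le_of_le_one ht0.le (by linarith) (by norm_num)
      linarith
    calc γ * 3 ^ d = t ^ 3 * (t * 3 ^ d) := by rw [← ht4]; ring
      _ ≤ δ * (1 / 2) := by gcongr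
      _ = δ / 2 := by ring
  set S := {a : ℝ | |√(1 + a ^ 2) - abs E| ≤ δ} with hS
  have hSm : MeasurableSet S := by
    apply measurableSet_le <;> fun_prop
  have hmp : ∀ x : {x // x ∈ Λ}, MeasurePreserving (Function.eval x)
      (unifPi {x // x ∈ Λ}) unif := fun x => measurePreserving_eval (fun _ => unif) x
  have hint : ∀ x : {x // x ∈ Λ},
      Integrable (fun u : {x // x ∈ Λ} → ℝ => (S.indicator 1 (u x) : ℝ)) (unifPi {x // x ∈ Λ}) := by
    intro x
    have : Integrable (S.indicator (1 : ℝ → ℝ)) unif :=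
      (integrable_const (1 : ℝ)).indicator hSm
    exact (hmp x).integrable_comp_of_integrable this
  have hval : ∀ x : {x // x ∈ Λ},
      ∫ u, (S.indicator 1 (u x) : ℝ) ∂(unifPi {x // x ∈ Λ}) ≤ 3 * √δ := by
    intro x
    have h1 : ∫ u, (S.indicator 1 (u x) : ℝ) ∂(unifPi {x // x ∈ Λ})
        = ∫ a, (S.indicator 1 a : ℝ) ∂unif := by
      rw [← (hmp x).map_eq, integral_map (hmp x).aemeasurable]
      exact ((measurable_one.indicator hSm)).aestronglyMeasurable
    rw [h1, integral_indicator_one hSm]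
    exact unif_bound _ _ hδ0
  calc ∫ u, (eigCount d γ Λ u E δ : ℝ) ∂(unifPi {x // x ∈ Λ})
      ≤ ∫ u, 2 * ∑ x, (S.indicator 1 (u x) : ℝ) ∂(unifPi {x // x ∈ Λ}) := by
        apply integral_mono_of_nonneg
        · exact Filter.Eventually.of_forall fun u => Nat.cast_nonneg _
        · exact (integrable_finsetSum _ fun x _ => hint x).const_mul 2
        · exact Filter.Eventually.of_forall fun u => eigCount_le d γ Λ u E δ hγ hδ0 hsmall
    _ = 2 * ∑ x, ∫ u, (S.indicator 1 (u x) : ℝ) ∂(unifPi {x // x ∈ Λ}) := by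
        rw [integral_const_mul, integral_finsetSum _ fun x _ => hint x]
    _ ≤ 2 * ∑ x : {x // x ∈ Λ}, 3 * √δ := by
        gcongr with x
        exact hval x
    _ = 6 * Real.sqrt δ * (Λ.card : ℝ) := by
        simp only [Finset.sum_const, Finset.card_univ, Fintype.card_coe, nsmul_eq_mul]
        ring
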